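/- A quasi-hyperbolic continuous linear cocycle over a compact base is hyperbolic over the non-wandering set Ω(ψ|_𝐁) of the base flow. -/

import Mathlib

open Filter Topology

/-- A continuous linear cocycle (`ℝ`-action by bundle isomorphisms on the
trivial vector bundle `B × E`) over a continuous flow on `B`. -/
structure LinearCocycle (B E : Type*) [TopologicalSpace B]
    [NormedAddCommGroup E] [NormedSpace ℝ E] where
  flow : ℝ → B → B
  flow_cont : Continuous fun p : ℝ × B => flow p.1 p.2
  flow_zero : ∀ b, flow 0 b = b
  flow_add : ∀ s t b, flow s (flow t b) = flow (s + t) b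
  P : ℝ → B → E →L[ℝ] E
  P_cont : Continuous fun p : ℝ × B => P p.1 p.2
  P_zero : ∀ b, P 0 b = ContinuousLinearMap.id ℝ E
  P_comp : ∀ s t b, (P s (flow t b)).comp (P t b) = P (s + t) b

variable {B E : Type*} [TopologicalSpace B]
  [NormedAddCommGroup E] [NormedSpace ℝ E]

/-- Quasi-hyperbolicity: every nonzero vector has unbounded orbit. -/
def LinearCocycle.IsQuasiHyperbolic (Φ : LinearCocycle B E) : Prop :=
  ∀ b : B, ∀ v : E, v ≠ 0 → ∀ C : ℝ, ∃ t : ℝ, C < ‖Φ.P t b v‖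

/-- The subspace of vectors with bounded forward orbit. -/
def LinearCocycle.stable (Φ : LinearCocycle B E) (b : B) : Submodule ℝ E where
  carrier := {v | ∃ C : ℝ, ∀ t > (0:ℝ), ‖Φ.P t b v‖ ≤ C}
  add_mem' := by
    rintro u v ⟨C₁, h₁⟩ ⟨C₂, h₂⟩
    exact ⟨C₁ + C₂, fun t ht => by
      simpa [map_add] using (norm_add_le (Φ.P t b u) (Φ.P t b v)).trans
        (add_le_add (h₁ t ht) (h₂ t ht))⟩
  zero_mem' := ⟨0, fun t ht => by simp⟩
  smul_mem' := by
    rintro c v ⟨C, h⟩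
    exact ⟨‖c‖ * C, fun t ht => by
      rw [map_smul, norm_smul]
      exact mul_le_mul_of_nonneg_left (h t ht) (norm_nonneg c)⟩

/-- The subspace of vectors with bounded backward orbit. -/
def LinearCocycle.unstable (Φ : LinearCocycle B E) (b : B) : Submodule ℝ E where
  carrier := {v | ∃ C : ℝ, ∀ t > (0:ℝ), ‖Φ.P (-t) b v‖ ≤ C}
  add_mem' := by
    rintro u v ⟨C₁, h₁⟩ ⟨C₂, h₂⟩
    exact ⟨C₁ + C₂, fun t ht => by
      simpa [map_add] using (norm_add_le (Φ.P (-t) b u) (Φ.P (-t) b v)).trans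
        (add_le_add (h₁ t ht) (h₂ t ht))⟩
  zero_mem' := ⟨0, fun t ht => by simp⟩
  smul_mem' := by
    rintro c v ⟨C, h⟩
    exact ⟨‖c‖ * C, fun t ht => by
      rw [map_smul, norm_smul]
      exact mul_le_mul_of_nonneg_left (h t ht) (norm_nonneg c)⟩

/-- Uniform hyperbolicity of a linear cocycle over an invariant subset `Λ`. -/
def LinearCocycle.IsHyperbolicOn (Φ : LinearCocycle B E) (Λ : Set B) : Prop :=
  ∃ Es Eu : B → Submodule ℝ E,
    (∀ t : ℝ, ∀ b ∈ Λ, (Es b).map (Φ.P t b : E →ₗ[ℝ] E) = Es (Φ.flow t b)) ∧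
    (∀ t : ℝ, ∀ b ∈ Λ, (Eu b).map (Φ.P t b : E →ₗ[ℝ] E) = Eu (Φ.flow t b)) ∧
    (∀ b ∈ Λ, IsCompl (Es b) (Eu b)) ∧
    ∃ T > (0:ℝ), ∀ b ∈ Λ,
      (∀ v ∈ Es b, v ≠ 0 → ‖Φ.P T b v‖ < (1/2) * ‖v‖) ∧
      (∀ v ∈ Eu b, v ≠ 0 → ‖Φ.P (-T) b v‖ < (1/2) * ‖v‖)

/-- The non-wandering set of the base flow of the cocycle: points `x` such
that every neighborhood `U` of `x` returns to itself at arbitrarily large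
times. -/
def LinearCocycle.nonWandering (Φ : LinearCocycle B E) : Set B :=
  {x | ∀ U ∈ 𝓝 x, ∀ T > (0:ℝ), ∃ t > T, (Φ.flow t '' U ∩ U).Nonempty}

namespace LinearCocycle

lemma P_apply (Φ : LinearCocycle B E) (s t : ℝ) (b : B) (v : E) :
    Φ.P s (Φ.flow t b) (Φ.P t b v) = Φ.P (s + t) b v := by
  rw [← Φ.P_comp]; rfl

lemma P_zero_apply (Φ : LinearCocycle B E) (b : B) (v : E) : Φ.P 0 b v = v := by
  rw [Φ.P_zero]; rfl

lemma P_inv (Φ : LinearCocycle B E) (t : ℝ) (b : B) (v : E) :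
    Φ.P (-t) (Φ.flow t b) (Φ.P t b v) = v := by
  rw [P_apply, neg_add_cancel, P_zero_apply]

lemma P_inv' (Φ : LinearCocycle B E) (t : ℝ) (b : B) (v : E) :
    Φ.P t b (Φ.P (-t) (Φ.flow t b) v) = v := by
  have h := Φ.P_inv (-t) (Φ.flow t b) v
  rwa [neg_neg, Φ.flow_add, neg_add_cancel, Φ.flow_zero] at h

lemma P_cont_apply (Φ : LinearCocycle B E) :
    Continuous fun p : ℝ × B × E => Φ.P p.1 p.2.1 p.2.2 := by
  have h : Continuous fun p : ℝ × B × E => Φ.P p.1 p.2.1 :=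
    Φ.P_cont.comp (by fun_prop : Continuous fun p : ℝ × B × E => (p.1, p.2.1))
  exact h.clm_apply (by fun_prop)

/-- The time-reversed cocycle. -/
def rev (Φ : LinearCocycle B E) : LinearCocycle B E where
  flow t b := Φ.flow (-t) b
  flow_cont := Φ.flow_cont.comp (by fun_prop : Continuous fun p : ℝ × B => (-p.1, p.2))
  flow_zero b := by simp [Φ.flow_zero]
  flow_add s t b := by rw [Φ.flow_add, neg_add]
  P t b := Φ.P (-t) b
  P_cont := Φ.P_cont.comp (by fun_prop : Continuous fun p : ℝ × B => (-p.1, p.2))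
  P_zero b := by simp [Φ.P_zero]
  P_comp s t b := by rw [Φ.P_comp, neg_add]

lemma rev_P (Φ : LinearCocycle B E) (t : ℝ) (b : B) : Φ.rev.P t b = Φ.P (-t) b := rfl

lemma rev_flow (Φ : LinearCocycle B E) (t : ℝ) (b : B) : Φ.rev.flow t b = Φ.flow (-t) b := rfl

lemma rev_stable (Φ : LinearCocycle B E) (b : B) : Φ.rev.stable b = Φ.unstable b := rfl

/-- Uniform constants. -/
structure Good (Φ : LinearCocycle B E) (T K : ℝ) : Prop where
  T_pos : 0 < T
  K_pos : 1 ≤ K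
  bound : ∀ t b v, |t| ≤ T → ‖Φ.P t b v‖ ≤ K * ‖v‖
  grow : ∀ b v, v ≠ 0 → ∃ t, |t| ≤ T ∧ 2 * ‖v‖ < ‖Φ.P t b v‖

lemma Good.rev {Φ : LinearCocycle B E} {T K : ℝ} (h : Good Φ T K) : Good Φ.rev T K where
  T_pos := h.T_pos
  K_pos := h.K_pos
  bound t b v ht := h.bound (-t) b v (by rwa [abs_neg])
  grow b v hv := by
    obtain ⟨t, ht, h2⟩ := h.grow b v hv
    exact ⟨-t, by rwa [abs_neg], by rw [rev_P, neg_neg]; exact h2⟩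

lemma compact_grow (Φ : LinearCocycle B E) {S : Set (B × E)} (hS : IsCompact S) (I : Set ℝ)
    (C : ℝ) (h : ∀ p ∈ S, ∃ t ∈ I, C < ‖Φ.P t p.1 p.2‖) :
    ∃ T > (0:ℝ), ∃ U : Set (B × E), IsOpen U ∧ S ⊆ U ∧
      ∀ p ∈ U, ∃ t ∈ I, |t| ≤ T ∧ C < ‖Φ.P t p.1 p.2‖ := by
  let V : I → Set (B × E) := fun t => {p | C < ‖Φ.P t p.1 p.2‖}
  have hV : ∀ t, IsOpen (V t) := fun t => by
    have : Continuous fun p : B × E => Φ.P t p.1 p.2 :=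
      Φ.P_cont_apply.comp (by fun_prop : Continuous fun p : B × E => ((t : ℝ), p.1, p.2))
    exact isOpen_lt continuous_const this.norm
  obtain ⟨F, hF⟩ := hS.elim_finite_subcover V hV (fun p hp => by
    obtain ⟨t, ht, h2⟩ := h p hp
    exact Set.mem_iUnion.2 ⟨⟨t, ht⟩, h2⟩)
  refine ⟨1 + ∑ t ∈ F, |(t : ℝ)|, ?_, ⋃ t ∈ F, V t, isOpen_biUnion fun t _ => hV t, hF, ?_⟩
  · have : 0 ≤ ∑ t ∈ F, |(t : ℝ)| := Finset.sum_nonneg fun _ _ => abs_nonneg _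
    linarith
  · intro p hp
    simp only [Set.mem_iUnion] at hp
    obtain ⟨t, ht, h2⟩ := hp
    refine ⟨t, t.2, ?_, h2⟩
    have := Finset.single_le_sum (f := fun t : I => |(t : ℝ)|) (fun _ _ => abs_nonneg _) ht
    linarith

lemma exists_good [CompactSpace B] [FiniteDimensional ℝ E]
    (Φ : LinearCocycle B E) (hqh : Φ.IsQuasiHyperbolic) : ∃ T K, Good Φ T K := by
  have : ProperSpace E := FiniteDimensional.proper ℝ E
  have hS : IsCompact ((Set.univ : Set B) ×ˢ Metric.sphere (0:E) 1) :=
    isCompact_univ.prod (isCompact_sphere _ _)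
  obtain ⟨T, hT, U, -, hSU, hU⟩ := Φ.compact_grow hS Set.univ 2 (by
    rintro ⟨b, v⟩ ⟨-, hv⟩
    have hv' : v ≠ 0 := by
      rintro rfl
      simp at hv
    obtain ⟨t, ht⟩ := hqh b v hv' 2
    exact ⟨t, trivial, ht⟩)
  have hK : IsCompact (Set.Icc (-T) T ×ˢ (Set.univ : Set B)) := isCompact_Icc.prod isCompact_univ
  obtain ⟨K, hK⟩ := hK.exists_bound_of_continuousOn Φ.P_cont.continuousOn
  refine ⟨T, max K 1, hT, le_max_right _ _, ?_, ?_⟩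
  · intro t b v ht
    have h1 := hK (t, b) ⟨abs_le.1 ht, trivial⟩
    refine (ContinuousLinearMap.le_opNorm _ _).trans ?_
    gcongr
    exact h1.trans (le_max_left _ _)
  · intro b v hv
    have hn : 0 < ‖v‖ := norm_pos_iff.2 hv
    obtain ⟨t, -, ht, h2⟩ := hU (b, ‖v‖⁻¹ • v) (hSU ⟨trivial, by
      simp [norm_smul, hn.ne']⟩)
    refine ⟨t, ht, ?_⟩
    simp only [map_smul, norm_smul, norm_inv, norm_norm] at h2
    rw [inv_mul_eq_div, lt_div_iff₀ hn] at h2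
    exact h2

lemma Good.half {Φ : LinearCocycle B E} {T K : ℝ} (h : Good Φ T K) {b : B} {v : E} {a M : ℝ}
    (hM : ∀ t ≥ a, ‖Φ.P t b v‖ ≤ M) : ∀ t ≥ a + T, ‖Φ.P t b v‖ ≤ M / 2 := by
  intro t ht
  have hT := h.T_pos
  have h0 := (norm_nonneg _).trans (hM t (by linarith))
  by_cases hz : Φ.P t b v = 0
  · rw [hz, norm_zero]; linarith
  obtain ⟨s, hs, h2⟩ := h.grow (Φ.flow t b) _ hz
  rw [P_apply] at h2
  have := hM (s + t) (by linarith [(abs_le.1 hs).1])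
  linarith

lemma Good.stable_bound {Φ : LinearCocycle B E} {T K : ℝ} (h : Good Φ T K) {b : B} {v : E}
    (hv : v ∈ Φ.stable b) : ∀ t ≥ 0, ‖Φ.P t b v‖ ≤ K * ‖v‖ := by
  obtain ⟨C, hC⟩ := hv
  have hT := h.T_pos
  have hKv : 0 ≤ K * ‖v‖ := mul_nonneg (by linarith [h.K_pos]) (norm_nonneg _)
  have key : ∀ n : ℕ, ∀ t ≥ 0, ‖Φ.P t b v‖ ≤ max (K * ‖v‖) (C / 2 ^ n) := by
    intro n
    induction n with
    | zero =>
      intro t ht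
      rcases ht.eq_or_lt with rfl | ht
      · exact (h.bound 0 b v (by simpa using hT.le)).trans (le_max_left _ _)
      · simpa using Or.inr (hC t ht)
    | succ n ih =>
      intro t ht
      by_cases htT : t ≤ T
      · exact (h.bound t b v (by rwa [abs_of_nonneg ht])).trans (le_max_left _ _)
      · refine (h.half ih t (by linarith)).trans ?_
        rcases max_cases (K * ‖v‖) (C / 2 ^ n) with ⟨he, -⟩ | ⟨he, -⟩
        · rw [he]; exact le_max_of_le_left (by linarith)
        · rw [he]; exact le_max_of_le_right (by rw [pow_succ, div_div])
  intro t ht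
  by_contra! hlt
  have hl : Tendsto (fun n : ℕ => C / 2 ^ n) atTop (𝓝 0) := by
    have := (tendsto_pow_atTop_nhds_zero_of_lt_one (r := (1/2:ℝ)) (by norm_num)
      (by norm_num)).const_mul C
    simpa [div_eq_mul_inv] using this
  have := ge_of_tendsto' hl (b := ‖Φ.P t b v‖) (fun n => by
    rcases le_max_iff.1 (key n t ht) with h1 | h1
    · linarith
    · exact h1)
  linarith

lemma Good.stable_decay {Φ : LinearCocycle B E} {T K : ℝ} (h : Good Φ T K) {b : B} {v : E}
    (hv : v ∈ Φ.stable b) (n : ℕ) : ∀ t ≥ n * T, ‖Φ.P t b v‖ ≤ K * ‖v‖ / 2 ^ n := by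
  induction n with
  | zero => simpa using h.stable_bound hv
  | succ n ih =>
    intro t ht
    have := h.half ih t (by push_cast at ht; linarith)
    rwa [div_div, ← pow_succ] at this

lemma Good.end_bound {Φ : LinearCocycle B E} {T K : ℝ} (h : Good Φ T K) {b : B} {v : E} {L : ℝ}
    (hg : ∃ t ∈ Set.Icc 0 L, K * ‖v‖ < ‖Φ.P t b v‖) :
    ∀ t ∈ Set.Icc 0 L, ‖Φ.P t b v‖ ≤ K * ‖Φ.P L b v‖ := by
  obtain ⟨t₀, ht₀, hg⟩ := hg
  have hc : Continuous fun t : ℝ => ‖Φ.P t b v‖ :=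
    (Φ.P_cont_apply.comp (by fun_prop : Continuous fun t : ℝ => (t, b, v))).norm
  obtain ⟨m, hm, hmax⟩ := isCompact_Icc.exists_isMaxOn ⟨t₀, ht₀⟩ hc.continuousOn
  have hmax : ∀ t ∈ Set.Icc 0 L, ‖Φ.P t b v‖ ≤ ‖Φ.P m b v‖ := fun t ht => hmax ht
  have hKv : 0 ≤ K * ‖v‖ := mul_nonneg (by linarith [h.K_pos]) (norm_nonneg _)
  have hmg : K * ‖v‖ < ‖Φ.P m b v‖ := hg.trans_le (hmax _ ht₀)
  have hmT : T < m := by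
    by_contra! hle
    exact absurd (h.bound m b v (by rwa [abs_of_nonneg hm.1])) (not_le.2 hmg)
  have hmL : L - T < m := by
    by_contra! hle
    obtain ⟨s, hs, h2⟩ := h.grow (Φ.flow m b) (Φ.P m b v) (norm_pos_iff.1 (hKv.trans_lt hmg))
    rw [P_apply] at h2
    have hs := abs_le.1 hs
    have := hmax (s + m) ⟨by linarith, by linarith⟩
    linarith
  intro t ht
  refine (hmax t ht).trans ?_
  have := h.bound (m - L) (Φ.flow L b) (Φ.P L b v)
    (abs_le.2 ⟨by linarith, by linarith [hm.2, h.T_pos]⟩)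
  rwa [P_apply, sub_add_cancel] at this

lemma nhds_grow [FiniteDimensional ℝ E] (Φ : LinearCocycle B E) (x : B) (F : Submodule ℝ E)
    (hF : Disjoint (Φ.stable x) F) (K : ℝ) :
    ∃ T > (0:ℝ), ∃ U ∈ 𝓝 x, ∀ y ∈ U, ∀ v ∈ F, v ≠ 0 →
      ∃ t ∈ Set.Icc 0 T, K * ‖v‖ < ‖Φ.P t y v‖ := by
  have : ProperSpace E := FiniteDimensional.proper ℝ E
  have hFc : IsClosed (F : Set E) := F.closed_of_finiteDimensional
  have hS2 : IsCompact (Metric.sphere (0:E) 1 ∩ F) := (isCompact_sphere _ _).inter_right hFc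
  obtain ⟨T, hT, U, hUo, hSU, hU⟩ := Φ.compact_grow ((isCompact_singleton (x := x)).prod hS2)
    (Set.Ioi 0) K (by
    rintro ⟨b, v⟩ ⟨hb, hv, hvF⟩
    obtain rfl : b = x := hb
    by_contra! hcon
    have hvs : v ∈ Φ.stable b := ⟨K, fun t ht => hcon t ht⟩
    have : v = 0 := Submodule.disjoint_def.1 hF v hvs hvF
    subst this
    simp at hv)
  obtain ⟨u, w, hu, -, hxu, hw, huw⟩ :=
    generalized_tube_lemma (isCompact_singleton (x := x)) hS2 hUo hSU
  refine ⟨T, hT, u, hu.mem_nhds (hxu rfl), fun y hy v hv hv0 => ?_⟩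
  have hn : 0 < ‖v‖ := norm_pos_iff.2 hv0
  obtain ⟨t, ht0, ht, h2⟩ := hU (y, ‖v‖⁻¹ • v) (huw ⟨hy, hw ⟨by
      simp [norm_smul, hn.ne'], F.smul_mem _ hv⟩⟩)
  refine ⟨t, ⟨le_of_lt ht0, (le_abs_self t).trans ht⟩, ?_⟩
  simp only [map_smul, norm_smul, norm_inv, norm_norm] at h2
  rw [inv_mul_eq_div, lt_div_iff₀ hn] at h2
  exact h2

lemma disjoint_su (Φ : LinearCocycle B E) (hqh : Φ.IsQuasiHyperbolic) (b : B) :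
    Disjoint (Φ.stable b) (Φ.unstable b) := by
  rw [Submodule.disjoint_def]
  rintro v ⟨C₁, h₁⟩ ⟨C₂, h₂⟩
  by_contra hv
  obtain ⟨t, ht⟩ := hqh b v hv (max (max C₁ C₂) ‖v‖)
  have h1 := (le_max_left _ _).trans (le_max_left (max C₁ C₂) ‖v‖)
  have h2 := (le_max_right _ _).trans (le_max_left (max C₁ C₂) ‖v‖)
  have h3 := le_max_right (max C₁ C₂) ‖v‖
  rcases lt_trichotomy t 0 with h | rfl | h
  · have := h₂ (-t) (by linarith)
    rw [neg_neg] at this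
    linarith
  · rw [P_zero_apply] at ht
    linarith
  · have := h₁ t h
    linarith

lemma Good.isCompl [FiniteDimensional ℝ E] {Φ : LinearCocycle B E} {T K : ℝ} (h : Good Φ T K)
    (hqh : Φ.IsQuasiHyperbolic) {x : B} (hx : x ∈ Φ.nonWandering) :
    IsCompl (Φ.stable x) (Φ.unstable x) := by
  have hd := Φ.disjoint_su hqh x
  obtain ⟨F, hF⟩ := (Φ.stable x).exists_isCompl
  obtain ⟨G, hG⟩ := (Φ.unstable x).exists_isCompl
  obtain ⟨T₁, hT₁, U₁, hU₁, h₁⟩ := Φ.nhds_grow x F hF.disjoint K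
  obtain ⟨T₂, hT₂, U₂, hU₂, h₂⟩ := Φ.rev.nhds_grow x G hG.disjoint K
  obtain ⟨L, hL, y, ⟨z, hz, rfl⟩, hy⟩ := hx (U₁ ∩ U₂) (inter_mem hU₁ hU₂) (T₁ + T₂) (by linarith)
  have hinj : Function.Injective (Φ.P L z : E →ₗ[ℝ] E) := fun a c hac => by
    have := congrArg (Φ.P (-L) (Φ.flow L z)) hac
    simpa [P_inv] using this
  have hdisj : Disjoint (F.map (Φ.P L z : E →ₗ[ℝ] E)) G := by
    rw [Submodule.disjoint_def]
    rintro _ ⟨v, hv, rfl⟩ hG'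
    by_contra hne
    have hv0 : v ≠ 0 := by
      rintro rfl
      simp at hne
    obtain ⟨t, ht, ht'⟩ := h₁ z hz.1 v hv hv0
    have hb := h.end_bound (L := L) ⟨t, ⟨ht.1, by linarith [ht.2]⟩, ht'⟩
    obtain ⟨s, hs, hs'⟩ := h₂ _ hy.2 _ hG' hne
    have h3 := hb (-s + L) ⟨by linarith [hs.2], by linarith [hs.1]⟩
    simp only [rev_P, ContinuousLinearMap.coe_coe, P_apply] at hs'
    linarith
  have e1 := Submodule.finrank_add_eq_of_isCompl hF
  have e2 := Submodule.finrank_add_eq_of_isCompl hG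
  have e3 := Submodule.finrank_add_finrank_le_of_disjoint hdisj
  rw [← (Submodule.equivMapOfInjective _ hinj F).finrank_eq] at e3
  have e4 := Submodule.finrank_add_finrank_le_of_disjoint hd
  have e5 : Module.finrank ℝ (Φ.rev.stable x) = Module.finrank ℝ (Φ.unstable x) := rfl
  refine (Submodule.isCompl_iff_disjoint _ _ ?_).2 hd
  omega

lemma Good.map_le {Φ : LinearCocycle B E} {T K : ℝ} (h : Good Φ T K) (t : ℝ) (b : B) :
    ∀ v ∈ Φ.stable b, Φ.P t b v ∈ Φ.stable (Φ.flow t b) := by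
  intro v hv
  have hb := h.stable_bound hv
  have hc : Continuous fun t : ℝ => ‖Φ.P t b v‖ :=
    (Φ.P_cont_apply.comp (by fun_prop : Continuous fun t : ℝ => (t, b, v))).norm
  obtain ⟨C, hC⟩ := (isCompact_Icc (a := t) (b := 0)).bddAbove_image hc.continuousOn
  refine ⟨max (K * ‖v‖) C, fun s hs => ?_⟩
  rw [P_apply]
  by_cases h0 : 0 ≤ s + t
  · exact (hb _ h0).trans (le_max_left _ _)
  · exact (hC ⟨s + t, ⟨by linarith, by linarith⟩, rfl⟩).trans (le_max_right _ _)

lemma Good.map_eq {Φ : LinearCocycle B E} {T K : ℝ} (h : Good Φ T K) (t : ℝ) (b : B) :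
    (Φ.stable b).map (Φ.P t b : E →ₗ[ℝ] E) = Φ.stable (Φ.flow t b) := by
  apply le_antisymm
  · rintro _ ⟨v, hv, rfl⟩
    exact h.map_le t b v hv
  · intro w hw
    refine ⟨Φ.P (-t) (Φ.flow t b) w, ?_, Φ.P_inv' t b w⟩
    have := h.map_le (-t) _ w hw
    rwa [Φ.flow_add, neg_add_cancel, Φ.flow_zero] at this

end LinearCocycle

/-- A quasi-hyperbolic continuous linear cocycle over a compact base is
hyperbolic over the non-wandering set of the base flow. -/
theorem quasi_hyperbolic_hyperbolic_on_nonwandering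
    [CompactSpace B] [FiniteDimensional ℝ E]
    (Φ : LinearCocycle B E) (hqh : Φ.IsQuasiHyperbolic) :
    Φ.IsHyperbolicOn Φ.nonWandering := by
  obtain ⟨T, K, h⟩ := Φ.exists_good hqh
  obtain ⟨n, hn⟩ := pow_unbounded_of_one_lt (2 * K) (one_lt_two (α := ℝ))
  have hK := h.K_pos
  have hT := h.T_pos
  have hn0 : n ≠ 0 := by
    rintro rfl
    simp at hn
    linarith
  have hlt : ∀ v : E, v ≠ 0 → K * ‖v‖ / 2 ^ n < (1/2) * ‖v‖ := by
    intro v hv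
    have hv := norm_pos_iff.2 hv
    rw [div_lt_iff₀ (by positivity)]
    nlinarith
  refine ⟨Φ.stable, Φ.unstable, fun t b _ => h.map_eq t b, fun t b _ => ?_,
    fun b hb => h.isCompl hqh hb, n * T, by positivity, fun b _ => ⟨fun v hv hv0 => ?_,
      fun v hv hv0 => ?_⟩⟩
  · have := h.rev.map_eq (-t) b
    simp only [LinearCocycle.rev_P, LinearCocycle.rev_flow, neg_neg] at this
    exact this
  · exact (h.stable_decay hv n _ le_rfl).trans_lt (hlt v hv0)
  · exact (h.rev.stable_decay (b := b) hv n _ le_rfl).trans_lt (hlt v hv0)
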